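/- Pointwise completeness relation: with v_k(i) = Δ_k·c_k(i)/π_i where Δ_k² = (Σ_{i=0}^{N_w} c_k(i)²/π_i)^{−1} and Δ_k > 0, for every i ∈ {0,...,N_w}: Σ_{k=0}^{N_w} v_k(i)² = 1/π_i. Equivalently, Σ_{k=1}^{N_w} v_k(i)² = 1/π_i − 1. -/

import Mathlib

/-!
The generating polynomial of `c_k` is `G = (1 - X)^k ₂F₁(k - N1, k - Nw; N2 - Nw + 1; X)`. The
hypergeometric equation for the second factor turns into a second order equation for `G`, whose
coefficients form a three-term recurrence. It says that the discrete flux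
`J_k(i) = (i+1)(i+N2-Nw+1) c_k(i+1) - (N1-i)(Nw-i) c_k(i)` has increments `-k(N+1-k) c_k(i)`
(`flux_zero`, `flux_succ`); that is, `c_k` is an eigenvector of the Bernoulli–Laplace chain.

The chain is reversible with respect to `π` (`piBL_balance`), so summation by parts
(`wronskian_sum`) shows that `c_k` and `c_l` are orthogonal for the weight `1/π` once the numbers
`k(N+1-k)` and `l(N+1-l)` differ, which holds for `k ≠ l` because `k + l ≤ 2 Nw < N + 1`. The flux
vanishes at the end point `Nw` since `G` has degree at most `Nw`. Hence the square matrices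
`(Δ_k² c_k(i))` and `(c_l(i)/π_i)` are inverse to each other on one side, therefore on the other
side, and the diagonal of that second product is the completeness relation. Finally the flux of
`c_0` is zero, so `c_0` is proportional to `π`, and `v_0 = 1` because `π` has total mass one.
-/

open Finset

noncomputable section

/-- Rising factorial (Pochhammer symbol) `a (a+1) ⋯ (a+m-1)` in `ℚ`. -/
def rfQ (a : ℚ) : ℕ → ℚ
  | 0 => 1
  | m + 1 => rfQ a m * (a + m)

/-- Components `c_k(i)` of the `k`-th right eigenvector of the BL transition matrix. -/
def cBL (N1 N2 Nw : ℕ) (k i : ℕ) : ℝ :=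
  ((∑ n ∈ Finset.range (min k i + 1),
    (Nat.choose k n : ℚ) * (-1) ^ n
      * rfQ ((k : ℚ) - N1) (i - n) * rfQ ((k : ℚ) - Nw) (i - n)
      / (rfQ ((N2 : ℚ) - Nw + 1) (i - n) * (Nat.factorial (i - n) : ℚ)) : ℚ) : ℝ)

/-- Up-transition probability `p_j` of the BL model. -/
def pBL (N1 N2 Nw : ℕ) (j : ℕ) : ℝ :=
  ((N1 : ℝ) - j) * ((Nw : ℝ) - j) / ((N1 : ℝ) * N2)

/-- Down-transition probability `q_j` of the BL model. -/
def qBL (N1 N2 Nb : ℕ) (j : ℕ) : ℝ :=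
  (j : ℝ) * ((Nb : ℝ) - N1 + j) / ((N1 : ℝ) * N2)

/-- The Bernoulli–Laplace transition matrix `T`. -/
def TBL (N1 N2 Nw Nb : ℕ) : Matrix (Fin (Nw + 1)) (Fin (Nw + 1)) ℝ :=
  fun i j =>
    if (i : ℕ) = (j : ℕ) + 1 then pBL N1 N2 Nw j
    else if (i : ℕ) + 1 = (j : ℕ) then qBL N1 N2 Nb j
    else if (i : ℕ) = (j : ℕ) then 1 - pBL N1 N2 Nw j - qBL N1 N2 Nb j
    else 0

/-- Eigenvalue `λ_k = 1 - k (N+1-k) / (N1 N2)`. -/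
def lamBL (N1 N2 N : ℕ) (k : ℕ) : ℝ :=
  1 - (k : ℝ) * ((N : ℝ) + 1 - k) / ((N1 : ℝ) * N2)

/-- The hypergeometric stationary distribution `π_i = C(Nw,i) C(N-Nw,N1-i) / C(N,N1)`. -/
def piBL (N1 Nw N : ℕ) (i : ℕ) : ℝ :=
  (Nat.choose Nw i : ℝ) * (Nat.choose (N - Nw) (N1 - i) : ℝ) / (Nat.choose N N1 : ℝ)

/-- The orthogonal measure `Δ_k² = (Σ_i c_k(i)²/π_i)⁻¹`. -/
def DeltaSqBL (N1 N2 Nw N : ℕ) (k : ℕ) : ℝ :=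
  (∑ i ∈ Finset.range (Nw + 1), (cBL N1 N2 Nw k i) ^ 2 / piBL N1 Nw N i)⁻¹

/-- `Δ_k > 0`, the positive square root of `Δ_k²`. -/
def DeltaBL (N1 N2 Nw N : ℕ) (k : ℕ) : ℝ :=
  Real.sqrt (DeltaSqBL N1 N2 Nw N k)

/-- Right eigenvectors of the symmetrized matrix: `v_k(i) = Δ_k c_k(i) / π_i`. -/
def vBL (N1 N2 Nw N : ℕ) (k i : ℕ) : ℝ :=
  DeltaBL N1 N2 Nw N k * cBL N1 N2 Nw k i / piBL N1 Nw N i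

/-- Orthonormal eigenvectors of the symmetrized matrix: `w_k(i) = Δ_k c_k(i) / √(π_i)`. -/
def wBL (N1 N2 Nw N : ℕ) (k i : ℕ) : ℝ :=
  DeltaBL N1 N2 Nw N k * cBL N1 N2 Nw k i / Real.sqrt (piBL N1 Nw N i)

/-! ### Hypergeometric and binomial series -/

lemma rfQ_pos {a : ℚ} (ha : 0 < a) (m : ℕ) : 0 < rfQ a m := by
  induction m with
  | zero => simp [rfQ]
  | succ m ih => simp only [rfQ]; positivity

/-- A rising factorial started at `-r` picks up the factor `0` as soon as it is longer than `r`. -/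
lemma rfQ_neg_eq_zero (r m : ℕ) (h : r < m) : rfQ (-(r : ℚ)) m = 0 := by
  induction m with
  | zero => omega
  | succ m ih =>
    simp only [rfQ]
    rcases Nat.lt_succ_iff_lt_or_eq.mp h with h | h
    · rw [ih h, zero_mul]
    · subst h; simp

/-- Coefficients of the Gauss hypergeometric series `₂F₁(a, b; c; X)`. -/
def hypCoeff (a b c : ℚ) (m : ℕ) : ℚ :=
  rfQ a m * rfQ b m / (rfQ c m * (Nat.factorial m : ℚ))

lemma hypCoeff_succ (a b c : ℚ) (hc : 0 < c) (m : ℕ) :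
    (m + 1) * (m + c) * hypCoeff a b c (m + 1) = (a + m) * (b + m) * hypCoeff a b c m := by
  have h1 := (rfQ_pos hc m).ne'
  have h2 : c + m ≠ 0 := by positivity
  have h3 : (Nat.factorial m : ℚ) ≠ 0 := by positivity
  have h4 : (m : ℚ) + 1 ≠ 0 := by positivity
  simp only [hypCoeff, rfQ, Nat.factorial_succ]
  push_cast
  field_simp
  ring

open PowerSeries in
/-- The Euler operator `X d/dX` multiplies the `n`-th coefficient by `n`. -/
lemma coeff_X_mul_derivative (P : PowerSeries ℚ) (n : ℕ) :
    coeff n (X * derivative ℚ P) = n * coeff n P := by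
  cases n with
  | zero => simp
  | succ n =>
    rw [coeff_succ_X_mul, coeff_derivative]
    push_cast
    ring

open PowerSeries in
/-- `₂F₁(a, b; c; X)` as a formal power series. -/
def hypSeries (a b c : ℚ) : PowerSeries ℚ := PowerSeries.mk (hypCoeff a b c)

open PowerSeries in
/-- `(1 - X)^k` as a formal power series, given by its coefficients. -/
def binSeries (k : ℕ) : PowerSeries ℚ := PowerSeries.mk fun n => (Nat.choose k n : ℚ) * (-1) ^ n

open PowerSeries in
/-- For all `P`, the coefficients of `X P'' + c P'` are `(n+1)(n+c) P_{n+1}`. -/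
lemma coeff_second_order (P : PowerSeries ℚ) (c : ℚ) (n : ℕ) :
    coeff n (X * derivative ℚ (derivative ℚ P) + C c * derivative ℚ P)
      = (n + 1) * (n + c) * coeff (n + 1) P := by
  rw [map_add, coeff_X_mul_derivative, coeff_C_mul, coeff_derivative]
  ring

open PowerSeries in
/-- For all `P`, the coefficients of `(θ + a)(θ + b) P`, where `θ = X d/dX`, are
`(n+a)(n+b) P_n`. -/
lemma coeff_euler_quadratic (P : PowerSeries ℚ) (a b : ℚ) (n : ℕ) :
    coeff n (X * (X * derivative ℚ (derivative ℚ P)) + (C a + C b + 1) * (X * derivative ℚ P)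
      + C a * C b * P) = (a + n) * (b + n) * coeff n P := by
  have e : X * (X * derivative ℚ (derivative ℚ P))
      = X * derivative ℚ (X * derivative ℚ P) - X * derivative ℚ P := by
    rw [Derivation.leibniz, derivative_X]
    simp only [smul_eq_mul]
    ring
  have e2 : (C a + C b + 1 : PowerSeries ℚ) = C (a + b + 1) := by simp
  have e3 : (C a * C b : PowerSeries ℚ) = C (a * b) := by simp
  rw [e, e2, e3, map_add, map_add, map_sub, coeff_C_mul, coeff_C_mul, coeff_X_mul_derivative,
    coeff_X_mul_derivative]
  ring

open PowerSeries in
lemma hypSeries_ode (a b c : ℚ) (hc : 0 < c) :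
    X * derivative ℚ (derivative ℚ (hypSeries a b c)) + C c * derivative ℚ (hypSeries a b c)
      = X * (X * derivative ℚ (derivative ℚ (hypSeries a b c)))
        + (C a + C b + 1) * (X * derivative ℚ (hypSeries a b c))
        + C a * C b * hypSeries a b c := by
  ext n
  rw [coeff_second_order, coeff_euler_quadratic]
  simpa [hypSeries] using hypCoeff_succ a b c hc n

open PowerSeries in
lemma binSeries_ode (k : ℕ) :
    (1 - X) * derivative ℚ (binSeries k) = - (C (k : ℚ) * binSeries k) := by
  ext n
  rw [sub_mul, one_mul, map_sub, coeff_X_mul_derivative, map_neg, coeff_C_mul, coeff_derivative]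
  simp only [binSeries, coeff_mk]
  have h : (Nat.choose k (n + 1) : ℚ) * (n + 1) = Nat.choose k n * (k - n) := by
    rcases le_or_gt n k with hn | hn
    · have := Nat.choose_succ_right_eq k n
      rw [← Nat.cast_sub hn]
      exact_mod_cast this
    · simp [Nat.choose_eq_zero_of_lt hn, Nat.choose_eq_zero_of_lt (Nat.lt_succ_of_lt hn)]
  rw [pow_succ]
  linear_combination (-(-1) ^ n) * h

open PowerSeries in
/-- The equation for `G = (1 - X)^k F`, `F = ₂F₁(a, b; c; X)`, written as `(1 - X) J = const * G`
where `J` is the generating series of the flux. -/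
lemma product_ode (a b c : ℚ) (hc : 0 < c) (k : ℕ) (G : PowerSeries ℚ)
    (hG : G = binSeries k * hypSeries a b c) :
    (1 - X) * (X * derivative ℚ (derivative ℚ G) + C c * derivative ℚ G
      - (X * (X * derivative ℚ (derivative ℚ G))
        + (C (a - k) + C (b - k) + 1) * (X * derivative ℚ G) + C (a - k) * C (b - k) * G))
      = C (-(k * (c + k - a - b))) * G := by
  have hF := hypSeries_ode a b c hc
  have hB := binSeries_ode k
  have hB2 := congrArg (derivative ℚ) hB
  set F := hypSeries a b c
  set B := binSeries k
  simp only [Derivation.leibniz, smul_eq_mul, map_sub, map_neg, derivative_X, derivative_C,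
    Derivation.map_one_eq_zero, mul_zero, add_zero] at hB2
  subst hG
  simp only [Derivation.leibniz, smul_eq_mul, map_add, map_sub, map_neg, map_mul]
  -- The terms in `F'` cancel; in the terms in `F` the factor `1 - X` divides out after replacing
  -- `(1 - X) B'` and `(1 - X)² B''` by multiples of `B`.
  linear_combination ((1 - X) * B) * hF + (2 * X * (1 - X) * derivative ℚ F) * hB
    + (X * (1 - X) * F) * hB2 + (X * F * (1 - C (k : ℚ))) * hB
    + ((C c - (C a + C b - 2 * C (k : ℚ) + 1) * X) * F) * hB

/-! ### The recurrence in flux form -/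

/-- The components `c_k(i)` before the cast to `ℝ`. -/
def cQ (N1 N2 Nw : ℕ) (k i : ℕ) : ℚ :=
  ∑ n ∈ Finset.range (min k i + 1),
    (Nat.choose k n : ℚ) * (-1) ^ n
      * rfQ ((k : ℚ) - N1) (i - n) * rfQ ((k : ℚ) - Nw) (i - n)
      / (rfQ ((N2 : ℚ) - Nw + 1) (i - n) * (Nat.factorial (i - n) : ℚ))

lemma cBL_eq_cast (N1 N2 Nw k i : ℕ) : cBL N1 N2 Nw k i = (cQ N1 N2 Nw k i : ℝ) := rfl

open PowerSeries in
lemma coeff_product (N1 N2 Nw k i : ℕ) :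
    coeff i (binSeries k * hypSeries ((k : ℚ) - N1) ((k : ℚ) - Nw) ((N2 : ℚ) - Nw + 1))
      = cQ N1 N2 Nw k i := by
  rw [coeff_mul, Finset.Nat.sum_antidiagonal_eq_sum_range_succ_mk, cQ]
  simp only [binSeries, hypSeries, coeff_mk, hypCoeff]
  rw [← Finset.sum_subset (s₁ := Finset.range (min k i + 1))]
  · refine Finset.sum_congr rfl fun n _ => ?_
    ring
  · intro n hn
    simp only [Finset.mem_range] at *
    omega
  · intro n hn hn'
    simp only [Finset.mem_range] at *
    rw [Nat.choose_eq_zero_of_lt (by omega)]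
    simp

/-- The generating polynomial of `c_k` has degree at most `Nw`. -/
lemma cBL_end (N1 N2 Nw k : ℕ) (hk : k ≤ Nw) : cBL N1 N2 Nw k (Nw + 1) = 0 := by
  rw [cBL_eq_cast, cQ, Finset.sum_eq_zero, Rat.cast_zero]
  intro n hn
  simp only [Finset.mem_range] at hn
  have : (k : ℚ) - Nw = -((Nw - k : ℕ) : ℚ) := by
    rw [Nat.cast_sub hk]; ring
  rw [this, rfQ_neg_eq_zero _ _ (by omega)]
  simp

lemma cBL_start (N1 N2 Nw k : ℕ) : cBL N1 N2 Nw k 0 = 1 := by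
  simp [cBL, rfQ]

/-- The net flux of `c_k` from state `i + 1` to state `i` in the Bernoulli–Laplace chain, up to the
factor `N1 * N2`. -/
def flux (N1 N2 Nw k i : ℕ) : ℝ :=
  (i + 1) * (i + ((N2 : ℝ) - Nw + 1)) * cBL N1 N2 Nw k (i + 1)
    - ((N1 : ℝ) - i) * ((Nw : ℝ) - i) * cBL N1 N2 Nw k i

open PowerSeries in
/-- `flux` as the coefficients of a power series satisfying the equation of `product_ode`. -/
lemma flux_series (N1 N2 Nw k : ℕ) (hw2 : Nw ≤ N2) : ∃ P : PowerSeries ℚ,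
    (∀ i, ((coeff i P : ℚ) : ℝ) = flux N1 N2 Nw k i) ∧
    (1 - X) * P = C (-(k * ((N1 : ℚ) + N2 + 1 - k))) *
      (binSeries k * hypSeries ((k : ℚ) - N1) ((k : ℚ) - Nw) ((N2 : ℚ) - Nw + 1)) := by
  have hc : 0 < (N2 : ℚ) - Nw + 1 := by
    have : (Nw : ℚ) ≤ N2 := by exact_mod_cast hw2
    linarith
  have h := product_ode ((k : ℚ) - N1) ((k : ℚ) - Nw) ((N2 : ℚ) - Nw + 1) hc k _ rfl
  refine ⟨_, fun i => ?_, h.trans ?_⟩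
  · rw [map_sub, coeff_second_order, coeff_euler_quadratic, coeff_product, coeff_product, flux,
      cBL_eq_cast, cBL_eq_cast]
    push_cast
    ring
  · congr 2
    ring

lemma flux_zero (N1 N2 Nw k : ℕ) (hw2 : Nw ≤ N2) :
    flux N1 N2 Nw k 0 = -(k * ((N1 : ℝ) + N2 + 1 - k)) * cBL N1 N2 Nw k 0 := by
  obtain ⟨P, hP, h⟩ := flux_series N1 N2 Nw k hw2
  have h0 := congrArg (PowerSeries.coeff 0) h
  rw [sub_mul, one_mul, map_sub, PowerSeries.coeff_zero_X_mul, PowerSeries.coeff_C_mul,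
    coeff_product, sub_zero] at h0
  rw [← hP, h0, cBL_eq_cast]
  push_cast
  ring

lemma flux_succ (N1 N2 Nw k i : ℕ) (hw2 : Nw ≤ N2) :
    flux N1 N2 Nw k (i + 1) = flux N1 N2 Nw k i
      - (k * ((N1 : ℝ) + N2 + 1 - k)) * cBL N1 N2 Nw k (i + 1) := by
  obtain ⟨P, hP, h⟩ := flux_series N1 N2 Nw k hw2
  have h0 := congrArg (PowerSeries.coeff (i + 1)) h
  rw [sub_mul, one_mul, map_sub, PowerSeries.coeff_succ_X_mul, PowerSeries.coeff_C_mul,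
    coeff_product, sub_eq_iff_eq_add] at h0
  rw [← hP, ← hP, h0, cBL_eq_cast]
  push_cast
  ring

lemma flux_end (N1 N2 Nw k : ℕ) (hk : k ≤ Nw) : flux N1 N2 Nw k Nw = 0 := by
  simp [flux, cBL_end N1 N2 Nw k hk]

/-! ### Reversibility and orthogonality -/

lemma piBL_pos (N1 N2 Nw i : ℕ) (hw2 : Nw ≤ N2) (hi : i ≤ Nw) :
    0 < piBL N1 Nw (N1 + N2) i := by
  have h1 := Nat.choose_pos hi
  have h2 : 0 < Nat.choose (N1 + N2 - Nw) (N1 - i) := Nat.choose_pos (by omega)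
  have h3 : 0 < Nat.choose (N1 + N2) N1 := Nat.choose_pos (by omega)
  unfold piBL
  positivity

/-- Detailed balance for the hypergeometric distribution. -/
lemma piBL_balance (N1 N2 Nw i : ℕ) (hw1 : Nw ≤ N1) (hw2 : Nw ≤ N2) (hi : i < Nw) :
    piBL N1 Nw (N1 + N2) i * (((N1 : ℝ) - i) * ((Nw : ℝ) - i))
      = piBL N1 Nw (N1 + N2) (i + 1) * ((i + 1) * (i + ((N2 : ℝ) - Nw + 1))) := by
  have h1 : (Nat.choose Nw (i + 1) : ℝ) * (i + 1) = Nat.choose Nw i * (Nw - i) := by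
    rw [← Nat.cast_sub hi.le]
    exact_mod_cast Nat.choose_succ_right_eq Nw i
  have h2 : (Nat.choose (N1 + N2 - Nw) (N1 - i) : ℝ) * (N1 - i)
      = Nat.choose (N1 + N2 - Nw) (N1 - (i + 1)) * (i + ((N2 : ℝ) - Nw + 1)) := by
    have h := Nat.choose_succ_right_eq (N1 + N2 - Nw) (N1 - (i + 1))
    rw [show N1 - (i + 1) + 1 = N1 - i by omega,
      show N1 + N2 - Nw - (N1 - (i + 1)) = N2 - Nw + (i + 1) by omega] at h
    rw [← Nat.cast_sub (show i ≤ N1 by omega), ← Nat.cast_sub hw2,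
      show (i : ℝ) + (((N2 - Nw : ℕ) : ℝ) + 1) = ((N2 - Nw + (i + 1) : ℕ) : ℝ) by
        push_cast; ring]
    exact_mod_cast h
  unfold piBL
  rw [div_mul_eq_mul_div, div_mul_eq_mul_div]
  congr 1
  linear_combination (-(Nat.choose (N1 + N2 - Nw) (N1 - i) : ℝ) * (N1 - i)) * h1
    + (Nat.choose Nw (i + 1) : ℝ) * (i + 1) * h2

/-- By detailed balance, the flux is a weighted difference of `c_k / π`. -/
lemma flux_eq_diff (N1 N2 Nw k i : ℕ) (hw1 : Nw ≤ N1) (hw2 : Nw ≤ N2) (hi : i < Nw) :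
    flux N1 N2 Nw k i = piBL N1 Nw (N1 + N2) i * (((N1 : ℝ) - i) * ((Nw : ℝ) - i)) *
      (cBL N1 N2 Nw k (i + 1) / piBL N1 Nw (N1 + N2) (i + 1)
        - cBL N1 N2 Nw k i / piBL N1 Nw (N1 + N2) i) := by
  have hb := piBL_balance N1 N2 Nw i hw1 hw2 hi
  have h0 := (piBL_pos N1 N2 Nw i hw2 hi.le).ne'
  have h1 := (piBL_pos N1 N2 Nw (i + 1) hw2 hi).ne'
  rw [mul_sub, flux]
  congr 1
  · rw [hb]; field_simp
  · field_simp

/-- Summation by parts: the weighted inner product of `c_k` and `c_l` up to `n` is a discrete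
Wronskian at `n`. -/
lemma wronskian_sum (N1 N2 Nw k l n : ℕ) (hw1 : Nw ≤ N1) (hw2 : Nw ≤ N2) (hn : n ≤ Nw) :
    ((l * ((N1 : ℝ) + N2 + 1 - l)) - (k * ((N1 : ℝ) + N2 + 1 - k))) *
      ∑ i ∈ Finset.range (n + 1),
        cBL N1 N2 Nw k i * (cBL N1 N2 Nw l i / piBL N1 Nw (N1 + N2) i)
    = flux N1 N2 Nw k n * (cBL N1 N2 Nw l n / piBL N1 Nw (N1 + N2) n)
      - flux N1 N2 Nw l n * (cBL N1 N2 Nw k n / piBL N1 Nw (N1 + N2) n) := by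
  induction n with
  | zero =>
    rw [flux_zero _ _ _ _ hw2, flux_zero _ _ _ _ hw2, Finset.sum_range_one]
    ring
  | succ n ih =>
    have ih := ih (by omega)
    rw [Finset.sum_range_succ, mul_add, ih, flux_succ _ _ _ k _ hw2, flux_succ _ _ _ l _ hw2]
    rw [flux_eq_diff N1 N2 Nw k n hw1 hw2 hn, flux_eq_diff N1 N2 Nw l n hw1 hw2 hn]
    ring

lemma cBL_orthogonal (N1 N2 Nw k l : ℕ) (hw1 : Nw ≤ N1) (hw2 : Nw ≤ N2) (hk : k ≤ Nw)
    (hl : l ≤ Nw) (hkl : k ≠ l) :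
    ∑ i ∈ Finset.range (Nw + 1),
      cBL N1 N2 Nw k i * (cBL N1 N2 Nw l i / piBL N1 Nw (N1 + N2) i) = 0 := by
  have h := wronskian_sum N1 N2 Nw k l Nw hw1 hw2 le_rfl
  rw [flux_end _ _ _ _ hk, flux_end _ _ _ _ hl, zero_mul, zero_mul, sub_zero] at h
  refine (mul_eq_zero.mp h).resolve_left ?_
  have e : ((l * ((N1 : ℝ) + N2 + 1 - l)) - (k * ((N1 : ℝ) + N2 + 1 - k)))
      = ((l : ℝ) - k) * ((N1 : ℝ) + N2 + 1 - k - l) := by ring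
  rw [e]
  refine mul_ne_zero (sub_ne_zero.mpr fun h => hkl (by exact_mod_cast h.symm)) ?_
  have : (k : ℝ) + l ≤ N1 + N2 := by exact_mod_cast (by omega : k + l ≤ N1 + N2)
  linarith

/-! ### Completeness -/

lemma normSq_pos (N1 N2 Nw k : ℕ) (hw2 : Nw ≤ N2) :
    0 < ∑ i ∈ Finset.range (Nw + 1), (cBL N1 N2 Nw k i) ^ 2 / piBL N1 Nw (N1 + N2) i := by
  refine Finset.sum_pos' (fun i hi => ?_) ⟨0, by simp, ?_⟩
  · have := piBL_pos N1 N2 Nw i hw2 (by simp at hi; omega)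
    positivity
  · have := piBL_pos N1 N2 Nw 0 hw2 (by omega)
    rw [cBL_start]
    positivity

lemma DeltaBL_sq (N1 N2 Nw k : ℕ) (hw2 : Nw ≤ N2) :
    DeltaBL N1 N2 Nw (N1 + N2) k ^ 2 = DeltaSqBL N1 N2 Nw (N1 + N2) k :=
  Real.sq_sqrt (inv_nonneg.mpr (normSq_pos N1 N2 Nw k hw2).le)

/-- Completeness for the biorthogonal systems `Δ_k² c_k` and `c_k / π`: a one-sided inverse of a
square matrix is two-sided. -/
lemma completeness_aux (N1 N2 Nw i : ℕ) (hw1 : Nw ≤ N1) (hw2 : Nw ≤ N2) (hi : i ≤ Nw) :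
    ∑ k ∈ Finset.range (Nw + 1), (cBL N1 N2 Nw k i / piBL N1 Nw (N1 + N2) i) *
      (DeltaSqBL N1 N2 Nw (N1 + N2) k * cBL N1 N2 Nw k i) = 1 := by
  let A : Matrix (Fin (Nw + 1)) (Fin (Nw + 1)) ℝ :=
    fun k i => DeltaSqBL N1 N2 Nw (N1 + N2) k * cBL N1 N2 Nw k i
  let B : Matrix (Fin (Nw + 1)) (Fin (Nw + 1)) ℝ :=
    fun i l => cBL N1 N2 Nw l i / piBL N1 Nw (N1 + N2) i
  have hAB : A * B = 1 := by
    ext k l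
    have hsum : (A * B) k l = DeltaSqBL N1 N2 Nw (N1 + N2) k *
        ∑ i ∈ Finset.range (Nw + 1),
          cBL N1 N2 Nw k i * (cBL N1 N2 Nw l i / piBL N1 Nw (N1 + N2) i) := by
      rw [Matrix.mul_apply, Finset.mul_sum, Finset.sum_range]
      exact Finset.sum_congr rfl fun i _ => by simp only [A, B]; ring
    rw [hsum]
    by_cases hkl : k = l
    · subst hkl
      rw [Matrix.one_apply_eq, DeltaSqBL]
      have h := (normSq_pos N1 N2 Nw k hw2).ne'
      rw [← inv_mul_cancel₀ h]
      congr 1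
      exact Finset.sum_congr rfl fun i _ => by ring
    · rw [Matrix.one_apply_ne hkl, cBL_orthogonal N1 N2 Nw k l hw1 hw2 (by omega) (by omega)
        (fun h => hkl (Fin.ext h)), mul_zero]
  have hBA : B * A = 1 := mul_eq_one_comm.mp hAB
  have h := congrFun (congrFun hBA ⟨i, by omega⟩) ⟨i, by omega⟩
  rw [Matrix.mul_apply, Matrix.one_apply_eq] at h
  rw [Finset.sum_range]
  exact h

/-! ### The constant vector `v_0` -/

/-- Vandermonde's identity; the sum may stop at `Nw` since `C(Nw, i) = 0` beyond. -/
lemma piBL_sum (N1 N2 Nw : ℕ) (hw1 : Nw ≤ N1) :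
    ∑ i ∈ Finset.range (Nw + 1), piBL N1 Nw (N1 + N2) i = 1 := by
  have h3 : (Nat.choose (N1 + N2) N1 : ℝ) ≠ 0 := by
    exact_mod_cast (Nat.choose_pos (by omega : N1 ≤ N1 + N2)).ne'
  have h := Nat.add_choose_eq Nw (N1 + N2 - Nw) N1
  rw [show Nw + (N1 + N2 - Nw) = N1 + N2 by omega,
    Finset.Nat.sum_antidiagonal_eq_sum_range_succ_mk] at h
  simp only [piBL]
  rw [← Finset.sum_div, div_eq_one_iff_eq h3, h]
  push_cast
  refine Finset.sum_subset (fun i hi => ?_) fun i hi hi' => ?_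
  · simp only [Finset.mem_range] at *
    omega
  · simp only [Finset.mem_range] at *
    rw [Nat.choose_eq_zero_of_lt (by omega : Nw < i)]
    simp

lemma flux_of_index_zero (N1 N2 Nw i : ℕ) (hw2 : Nw ≤ N2) : flux N1 N2 Nw 0 i = 0 := by
  induction i with
  | zero => rw [flux_zero _ _ _ _ hw2]; simp
  | succ i ih => rw [flux_succ _ _ _ _ _ hw2, ih]; simp

lemma cBL_index_zero (N1 N2 Nw i : ℕ) (hw1 : Nw ≤ N1) (hw2 : Nw ≤ N2) (hi : i ≤ Nw) :
    cBL N1 N2 Nw 0 i / piBL N1 Nw (N1 + N2) i = 1 / piBL N1 Nw (N1 + N2) 0 := by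
  induction i with
  | zero => rw [cBL_start]
  | succ i ih =>
    rw [← ih (by omega)]
    have h := flux_of_index_zero N1 N2 Nw i hw2
    rw [flux_eq_diff N1 N2 Nw 0 i hw1 hw2 hi] at h
    refine sub_eq_zero.mp ((mul_eq_zero.mp h).resolve_left ?_)
    have h1 : (i : ℝ) < Nw := by exact_mod_cast hi
    have h2 : (Nw : ℝ) ≤ N1 := by exact_mod_cast hw1
    exact mul_ne_zero (piBL_pos N1 N2 Nw i hw2 (by omega)).ne'
      (mul_ne_zero (by linarith) (by linarith))

lemma vBL_index_zero_sq (N1 N2 Nw i : ℕ) (hw1 : Nw ≤ N1) (hw2 : Nw ≤ N2) (hi : i ≤ Nw) :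
    vBL N1 N2 Nw (N1 + N2) 0 i ^ 2 = 1 := by
  have h0 := (piBL_pos N1 N2 Nw 0 hw2 (by omega)).ne'
  have hD : DeltaSqBL N1 N2 Nw (N1 + N2) 0 = piBL N1 Nw (N1 + N2) 0 ^ 2 := by
    rw [DeltaSqBL, inv_eq_iff_eq_inv]
    have e : ∀ i ∈ Finset.range (Nw + 1), cBL N1 N2 Nw 0 i ^ 2 / piBL N1 Nw (N1 + N2) i
        = piBL N1 Nw (N1 + N2) i * (1 / piBL N1 Nw (N1 + N2) 0) ^ 2 := by
      intro i hi
      have hi : i ≤ Nw := by simp at hi; omega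
      have h1 := (piBL_pos N1 N2 Nw i hw2 hi).ne'
      rw [← cBL_index_zero N1 N2 Nw i hw1 hw2 hi]
      field_simp
    rw [Finset.sum_congr rfl e, ← Finset.sum_mul, piBL_sum N1 N2 Nw hw1]
    simp
  rw [vBL, mul_div_assoc, mul_pow, DeltaBL_sq _ _ _ _ hw2, hD,
    cBL_index_zero N1 N2 Nw i hw1 hw2 hi]
  field_simp

/-- Pointwise completeness relation: `Σ_k v_k(i)² = 1/π_i`, equivalently
`Σ_{k≥1} v_k(i)² = 1/π_i − 1`. -/
theorem BL_pointwise_completeness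
    (N1 N2 Nw Nb N : ℕ)
    (hN1 : 1 ≤ N1) (hN2 : 1 ≤ N2) (hN : N = N1 + N2) (hwb : Nw + Nb = N)
    (hw1 : Nw ≤ N1) (hw2 : Nw ≤ N2)
    (i : ℕ) (hi : i ≤ Nw) :
    (∑ k ∈ Finset.range (Nw + 1), (vBL N1 N2 Nw N k i) ^ 2 = 1 / piBL N1 Nw N i)
    ∧ (∑ k ∈ Finset.Icc 1 Nw, (vBL N1 N2 Nw N k i) ^ 2 = 1 / piBL N1 Nw N i - 1) := by
  subst hN
  have hmain : ∑ k ∈ Finset.range (Nw + 1), (vBL N1 N2 Nw (N1 + N2) k i) ^ 2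
      = 1 / piBL N1 Nw (N1 + N2) i := by
    rw [← completeness_aux N1 N2 Nw i hw1 hw2 hi, Finset.sum_div]
    refine Finset.sum_congr rfl fun k _ => ?_
    rw [vBL, div_pow, mul_pow, DeltaBL_sq _ _ _ _ hw2]
    ring
  refine ⟨hmain, ?_⟩
  rw [← hmain, Finset.range_eq_Ico, Finset.sum_eq_sum_Ico_succ_bot (by omega),
    vBL_index_zero_sq N1 N2 Nw i hw1 hw2 hi, add_sub_cancel_left]
  rfl
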